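/- arXiv:2006.12943 — 3 statements merged into one kernel-verified Lean document; each statement's English description precedes it below -/
import Mathlib

section
/- Let k be a positive integer, δ ∈ (0,1) with k/δ > 1, write L = ln(k/δ), and let N be a real number with N ≥ 2(√2 + 2/3)² k L. Let μ_1, …, μ_k be nonnegative reals with Σ_{i=1}^k μ_i = 1, and set t = N − (√2 + 2/3) √(k N L). Then Σ_{i=1}^k [ μ_i t + sqrt(2 t μ_i (1−μ_i) L) + (2/3) L ] ≤ N. -/
open Real

/-!
By Cauchy–Schwarz, `∑ √(μ i) ≤ √k`, so the slacks sum to at most `t + √(2 k L t) + (2/3) k L`.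
The lower bound on `N` gives `0 ≤ t ≤ N` and `k L ≤ N`, so the last two terms are at most `√2` and
`2/3` times `√(k N L)`; the choice of `t` reserves exactly the sum of these.
-/

section Slack

variable {ι : Type*} {L t N : ℝ}

/-- The slack `s_i` of a player with mean `p = μ_i`: the expected count `p t` plus a Bernstein-type
deviation term for `t` trials and failure probability `exp (-L) = δ / k`. -/
noncomputable def slack (L t p : ℝ) : ℝ :=
  p * t + √(2 * t * p * (1 - p) * L) + (2 / 3) * L

lemma slack_le {p : ℝ} (hL : 0 ≤ L) (ht : 0 ≤ t) (hp : 0 ≤ p) :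
    slack L t p ≤ p * t + √(2 * L * t) * √p + (2 / 3) * L := by
  have variance_le : 2 * t * p * (1 - p) * L ≤ 2 * L * t * p := by
    have : 0 ≤ 2 * L * t * p * p := by positivity
    linarith
  rw [slack, ← sqrt_mul (by positivity)]
  gcongr

lemma sum_sqrt_le_sqrt_card_mul_sum (s : Finset ι) {f : ι → ℝ} (hf : ∀ i ∈ s, 0 ≤ f i) :
    ∑ i ∈ s, √(f i) ≤ √(s.card * ∑ i ∈ s, f i) := by
  apply le_sqrt_of_sq_le
  calc (∑ i ∈ s, √(f i)) ^ 2
      ≤ s.card * ∑ i ∈ s, √(f i) ^ 2 := sq_sum_le_card_mul_sum_sq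
    _ = s.card * ∑ i ∈ s, f i := by
      rw [Finset.sum_congr rfl fun i hi => sq_sqrt (hf i hi)]

lemma sum_slack_le (s : Finset ι) {μ : ι → ℝ} (hL : 0 ≤ L) (ht : 0 ≤ t)
    (hμ : ∀ i ∈ s, 0 ≤ μ i) (hμsum : ∑ i ∈ s, μ i ≤ 1) :
    ∑ i ∈ s, slack L t (μ i) ≤ t + √(2 * (s.card * L) * t) + (2 / 3) * (s.card * L) := by
  calc ∑ i ∈ s, slack L t (μ i)
      ≤ ∑ i ∈ s, (μ i * t + √(2 * L * t) * √(μ i) + (2 / 3) * L) :=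
        Finset.sum_le_sum fun i hi => slack_le hL ht (hμ i hi)
    _ = (∑ i ∈ s, μ i) * t + √(2 * L * t) * ∑ i ∈ s, √(μ i) + (2 / 3) * (s.card * L) := by
        rw [Finset.sum_add_distrib, Finset.sum_add_distrib, ← Finset.sum_mul, ← Finset.mul_sum,
          Finset.sum_const, nsmul_eq_mul, mul_left_comm]
    _ ≤ 1 * t + √(2 * L * t) * √(s.card * 1) + (2 / 3) * (s.card * L) := by
        gcongr
        exact (sum_sqrt_le_sqrt_card_mul_sum s hμ).trans (by gcongr)
    _ = t + √(2 * (s.card * L) * t) + (2 / 3) * (s.card * L) := by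
        rw [one_mul, mul_one, ← sqrt_mul (by positivity)]
        ring_nf

lemma mul_sqrt_mul_le {a b c : ℝ} (ha : 0 ≤ a) (hb : 0 ≤ b) (h : c ^ 2 * a ≤ b) :
    c * √(a * b) ≤ b := by
  refine (abs_le_of_sq_le_sq' ?_ hb).2
  calc (c * √(a * b)) ^ 2 = c ^ 2 * a * b := by
        rw [mul_pow, sq_sqrt (mul_nonneg ha hb), mul_assoc]
    _ ≤ b * b := by gcongr
    _ = b ^ 2 := (sq b).symm

lemma add_sqrt_add_le_add_mul_sqrt {a : ℝ} (ha : 0 ≤ a) (haN : a ≤ N) (htN : t ≤ N) :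
    t + √(2 * a * t) + (2 / 3) * a ≤ t + (√2 + 2 / 3) * √(a * N) := by
  have sqrt_le : √(2 * a * t) ≤ √2 * √(a * N) := by
    rw [← sqrt_mul zero_le_two, ← mul_assoc]
    gcongr
  have le_sqrt : a ≤ √(a * N) := le_sqrt_of_sq_le (by rw [sq]; gcongr)
  linarith

theorem stmt_3_general [Fintype ι] (hL : 0 ≤ L)
    (hN : (√2 + 2 / 3) ^ 2 * Fintype.card ι * L ≤ N)
    {μ : ι → ℝ} (hμ0 : ∀ i, 0 ≤ μ i) (hμsum : ∑ i, μ i ≤ 1)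
    (ht : t = N - (√2 + 2 / 3) * √(Fintype.card ι * N * L)) :
    ∑ i, slack L t (μ i) ≤ N := by
  set a : ℝ := Fintype.card ι * L with ha_def
  have ha : 0 ≤ a := by positivity
  rw [mul_assoc, ← ha_def] at hN
  rw [mul_right_comm, ← ha_def] at ht
  have haN : a ≤ N := by
    have one_le : 1 ≤ (√2 + 2 / 3) ^ 2 :=
      one_le_pow₀ (by linarith [one_le_sqrt.2 one_le_two])
    exact (le_mul_of_one_le_left ha one_le).trans hN
  have ht0 : 0 ≤ t := ht ▸ sub_nonneg.2 (mul_sqrt_mul_le ha (ha.trans haN) hN)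
  have htN : t ≤ N := ht ▸ sub_le_self N (by positivity)
  calc ∑ i, slack L t (μ i)
      ≤ t + √(2 * a * t) + (2 / 3) * a := sum_slack_le _ hL ht0 (fun i _ => hμ0 i) hμsum
    _ ≤ t + (√2 + 2 / 3) * √(a * N) := add_sqrt_add_le_add_mul_sqrt ha haN htN
    _ = N := by rw [ht, sub_add_cancel]

end Slack

/-- Lemma 4.5 (setting `t`): with `L = ln(k/δ)`, `N ≥ 2(√2 + 2/3)² k L` and
`t = N − (√2 + 2/3) √(k N L)`, the sum of the slacks
`Σ_i [μ_i t + √(2 t μ_i (1−μ_i) L) + (2/3) L]` is at most `N`. -/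
theorem stmt_3 (k : ℕ) (hk : 0 < k)
    (δ : ℝ) (hδ : δ ∈ Set.Ioo (0 : ℝ) 1) (hkδ : 1 < (k : ℝ) / δ)
    (L : ℝ) (hL : L = Real.log ((k : ℝ) / δ))
    (N : ℝ) (hN : 2 * (Real.sqrt 2 + 2 / 3) ^ 2 * k * L ≤ N)
    (μ : Fin k → ℝ) (hμ0 : ∀ i, 0 ≤ μ i) (hμsum : ∑ i, μ i = 1)
    (t : ℝ) (ht : t = N - (Real.sqrt 2 + 2 / 3) * Real.sqrt (k * N * L)) :
    ∑ i, (μ i * t + Real.sqrt (2 * t * μ i * (1 - μ i) * L) + (2 / 3) * L) ≤ N := by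
  have hL0 : 0 ≤ L := hL ▸ (log_pos hkδ).le
  have hN' : (√2 + 2 / 3) ^ 2 * k * L ≤ N := by
    have : 0 ≤ (√2 + 2 / 3) ^ 2 * k * L := by positivity
    linarith
  exact stmt_3_general hL0 (by simpa using hN') hμ0 hμsum.le (by simpa using ht)
end

section
/- Let k be a positive integer, δ ∈ (0,1) with k/δ > 1, write L = ln(k/δ), and let N be a real number with N ≥ 2(√2 + 2/3)² k L. Set t = N − (√2 + 2/3) √(k N L). Let μ_1, …, μ_k be nonnegative reals with Σ_{i=1}^k μ_i = 1, and let n_1, …, n_k be reals with Σ_{i=1}^k n_i = t and |n_i − μ_i t| ≤ sqrt(2 t μ_i (1−μ_i) L) + (2/3) L for every i. Let I = { i : n_i > μ_i t }. Then Σ_{i ∈ I} (n_i − μ_i t) / ((N − t)/(2k)) < k; equivalently, Σ_{i ∈ I} (n_i − μ_i t) < (N − t)/2. -/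
open Real
open scoped Classical

/-!
Write `d i = n i - μ i * t`. The `d i` sum to zero, so the excess over `I` is half of `∑ |d i|`.
By Cauchy–Schwarz the standard deviations `√(μ i * (1 - μ i))` sum to at most `√(k - 1)`, whence
`∑ |d i| ≤ √(2 t L) √(k - 1) + (2/3) k L`. Since `t < N` and `k L < N`, this is less than
`(√2 + 2/3) √(k N L) = N - t`.
-/

lemma two_nsmul_sum_filter_lt_sub_eq_sum_abs_sub {ι G : Type*} [AddCommGroup G] [LinearOrder G]
    [IsOrderedAddMonoid G] {s : Finset ι} {f g : ι → G} (hfg : ∑ i ∈ s, f i = ∑ i ∈ s, g i) :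
    2 • ∑ i ∈ s with g i < f i, (f i - g i) = ∑ i ∈ s, |f i - g i| := by
  have sum_posPart : ∑ i ∈ s with g i < f i, (f i - g i) = ∑ i ∈ s, (f i - g i)⁺ := by
    simp only [Finset.sum_filter, posPart_eq_ite_lt, sub_pos]
  calc 2 • ∑ i ∈ s with g i < f i, (f i - g i)
      = ∑ i ∈ s, (|f i - g i| + (f i - g i)) := by
        simp only [sum_posPart, Finset.smul_sum, abs_add_eq_two_nsmul_posPart]
    _ = ∑ i ∈ s, |f i - g i| := by
        rw [Finset.sum_add_distrib, Finset.sum_sub_distrib, hfg, sub_self, add_zero]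

lemma sum_sqrt_mul_one_sub_le_of_mem_stdSimplex {ι : Type*} [Fintype ι] {p : ι → ℝ}
    (hp : p ∈ stdSimplex ℝ ι) :
    ∑ i, √(p i * (1 - p i)) ≤ √(Fintype.card ι - 1) :=
  calc ∑ i, √(p i * (1 - p i))
      = ∑ i, √(p i) * √(1 - p i) :=
        Finset.sum_congr rfl fun i _ ↦ sqrt_mul (hp.1 i) _
    _ ≤ √(∑ i, p i) * √(∑ i, (1 - p i)) :=
        sum_sqrt_mul_sqrt_le _ hp.1 fun i ↦ sub_nonneg.2 (mem_Icc_of_mem_stdSimplex hp i).2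
    _ = √(Fintype.card ι - 1) := by
        simp only [Finset.sum_sub_distrib, hp.2, sqrt_one, one_mul, Finset.sum_const,
          Finset.card_univ, nsmul_eq_mul, mul_one]

lemma sum_le_of_le_sqrt_mul_one_sub_add {ι : Type*} [Fintype ι] {p d : ι → ℝ} {v b : ℝ}
    (hp : p ∈ stdSimplex ℝ ι) (hv : 0 ≤ v) (hd : ∀ i, d i ≤ √(v * (p i * (1 - p i))) + b) :
    ∑ i, d i ≤ √(v * (Fintype.card ι - 1)) + Fintype.card ι * b :=
  calc ∑ i, d i
      ≤ ∑ i, (√v * √(p i * (1 - p i)) + b) :=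
        Finset.sum_le_sum fun i _ ↦ by simpa only [sqrt_mul hv] using hd i
    _ = √v * ∑ i, √(p i * (1 - p i)) + Fintype.card ι * b := by
        rw [Finset.sum_add_distrib, ← Finset.mul_sum, Finset.sum_const, Finset.card_univ,
          nsmul_eq_mul]
    _ ≤ √v * √(Fintype.card ι - 1) + Fintype.card ι * b := by
        gcongr
        exact sum_sqrt_mul_one_sub_le_of_mem_stdSimplex hp
    _ = √(v * (Fintype.card ι - 1)) + Fintype.card ι * b := by rw [sqrt_mul hv]

lemma lt_sqrt_mul_of_lt {a b : ℝ} (ha : 0 < a) (hab : a < b) : a < √(a * b) := by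
  rw [lt_sqrt ha.le, sq]
  gcongr

lemma div_div_two_mul_lt_iff {K : Type*} [Field K] [LinearOrder K] [IsStrictOrderedRing K]
    {x D k : K} (hk : 0 < k) (hD : 0 < D) : x / (D / (2 * k)) < k ↔ x < D / 2 := by
  rw [div_lt_iff₀ (by positivity), show k * (D / (2 * k)) = D / 2 by field_simp]

lemma sqrt_mul_sub_one_add_lt_mul_sqrt {a c k L N t : ℝ} (ha : 0 ≤ a) (hc : 0 < c) (hk : 1 ≤ k)
    (hL : 0 < L) (ht : 0 ≤ t) (htN : t ≤ N) (hkL : k * L < N) :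
    √(a * t * L * (k - 1)) + k * (c * L) < (√a + c) * √(k * N * L) := by
  have sqrt_term : √(a * t * L * (k - 1)) ≤ √a * √(k * N * L) := by
    rw [← sqrt_mul ha]
    apply sqrt_le_sqrt
    calc a * t * L * (k - 1)
        ≤ a * N * L * k := by
          have := ht.trans htN
          gcongr
          exact sub_le_self k zero_le_one
      _ = a * (k * N * L) := by ring
  have linear_term : k * (c * L) < c * √(k * N * L) := by
    rw [mul_left_comm, mul_right_comm k]
    gcongr
    exact lt_sqrt_mul_of_lt (by positivity) hkL
  rw [add_mul]
  exact add_lt_add_of_le_of_lt sqrt_term linear_term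

lemma mul_sqrt_mul_le_of_sq_mul_le {a c x : ℝ} (hc : 0 ≤ c) (hx : 0 ≤ x) (h : c ^ 2 * a ≤ x) :
    c * √(a * x) ≤ x :=
  calc c * √(a * x) = √(c ^ 2 * a * x) := by rw [mul_assoc, sqrt_mul (sq_nonneg c), sqrt_sq hc]
    _ ≤ x := sqrt_le_iff.2 ⟨hx, by rw [sq x]; gcongr⟩

/-- The bound on `N` amounts to `0 ≤ t`, so that the variances `t * μ i * (1 - μ i)` are
nonnegative. -/
theorem stmt_7_general {ι : Type*} [Fintype ι] {L N t : ℝ} (hL : 0 < L)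
    (hN : (√2 + 2 / 3) ^ 2 * Fintype.card ι * L ≤ N)
    (ht : t = N - (√2 + 2 / 3) * √(Fintype.card ι * N * L))
    {μ n : ι → ℝ} (hμ0 : ∀ i, 0 ≤ μ i) (hμsum : ∑ i, μ i = 1) (hnsum : ∑ i, n i = t)
    (hdev : ∀ i, |n i - μ i * t| ≤ √(2 * t * μ i * (1 - μ i) * L) + 2 / 3 * L) :
    ∑ i with μ i * t < n i, (n i - μ i * t) / ((N - t) / (2 * Fintype.card ι))
        < Fintype.card ι ∧
      ∑ i with μ i * t < n i, (n i - μ i * t) < (N - t) / 2 := by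
  have card_pos : 0 < Fintype.card ι := by
    have : Nonempty ι := not_isEmpty_iff.1 fun _ ↦ by simp at hμsum
    exact Fintype.card_pos
  have card_mul_pos : 0 < Fintype.card ι * L := by positivity
  have one_lt : 1 < √2 + 2 / 3 := by linarith [one_lt_sqrt_two]
  rw [mul_assoc] at hN
  have card_mul_lt : Fintype.card ι * L < N :=
    (lt_mul_of_one_lt_left card_mul_pos (one_lt_pow₀ one_lt two_ne_zero)).trans_le hN
  have t_nonneg : 0 ≤ t := by
    rw [ht, sub_nonneg, mul_right_comm]
    exact mul_sqrt_mul_le_of_sq_mul_le (by positivity) (card_mul_pos.trans card_mul_lt).le hN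
  have sum_abs_lt : ∑ i, |n i - μ i * t| < N - t :=
    calc ∑ i, |n i - μ i * t|
        ≤ √(2 * t * L * (Fintype.card ι - 1)) + Fintype.card ι * (2 / 3 * L) :=
          sum_le_of_le_sqrt_mul_one_sub_add ⟨hμ0, hμsum⟩ (by positivity) fun i ↦
            (hdev i).trans_eq (by ring_nf)
      _ < (√2 + 2 / 3) * √(Fintype.card ι * N * L) :=
          sqrt_mul_sub_one_add_lt_mul_sqrt zero_le_two (by positivity)
            (Nat.one_le_cast.2 card_pos) hL t_nonneg
            (ht ▸ sub_le_self N (by positivity)) card_mul_lt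
      _ = N - t := by rw [ht, sub_sub_cancel]
  have excess_lt : ∑ i with μ i * t < n i, (n i - μ i * t) < (N - t) / 2 := by
    have sum_eq : ∑ i, n i = ∑ i, μ i * t := by rw [hnsum, ← Finset.sum_mul, hμsum, one_mul]
    rwa [lt_div_iff₀' two_pos, ← Nat.cast_two, ← nsmul_eq_mul,
      two_nsmul_sum_filter_lt_sub_eq_sum_abs_sub sum_eq]
  have gap_pos : 0 < N - t := (Finset.sum_nonneg fun _ _ ↦ abs_nonneg _).trans_lt sum_abs_lt
  refine ⟨?_, excess_lt⟩
  rwa [← Finset.sum_div, div_div_two_mul_lt_iff (Nat.cast_pos.2 card_pos) gap_pos]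

/-- The deterministic core of Theorem 5.2: with `L = ln(k/δ)`, `N ≥ 2(√2+2/3)² k L`,
`t = N − (√2+2/3)√(k N L)`, and counters `n_i` summing to `t` and each deviating from
`μ_i t` by at most the Bernstein bound, the players `i` with `n_i > μ_i t` send fewer
than `k` notifications in total:
`Σ_{i ∈ I} (n_i − μ_i t) / ((N − t)/(2k)) < k`, equivalently
`Σ_{i ∈ I} (n_i − μ_i t) < (N − t)/2`. -/
theorem stmt_7 (k : ℕ) (hk : 0 < k)
    (δ : ℝ) (hδ : δ ∈ Set.Ioo (0 : ℝ) 1) (hkδ : 1 < (k : ℝ) / δ)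
    (L : ℝ) (hL : L = Real.log ((k : ℝ) / δ))
    (N : ℝ) (hN : 2 * (Real.sqrt 2 + 2 / 3) ^ 2 * k * L ≤ N)
    (t : ℝ) (ht : t = N - (Real.sqrt 2 + 2 / 3) * Real.sqrt (k * N * L))
    (μ : Fin k → ℝ) (hμ0 : ∀ i, 0 ≤ μ i) (hμsum : ∑ i, μ i = 1)
    (n : Fin k → ℝ) (hnsum : ∑ i, n i = t)
    (hdev : ∀ i, |n i - μ i * t| ≤ Real.sqrt (2 * t * μ i * (1 - μ i) * L) + (2 / 3) * L) :
    (∑ i ∈ Finset.univ.filter (fun i => μ i * t < n i),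
        (n i - μ i * t) / ((N - t) / (2 * k))) < (k : ℝ)
    ∧ (∑ i ∈ Finset.univ.filter (fun i => μ i * t < n i), (n i - μ i * t)) < (N - t) / 2 := by
  have L_pos : 0 < L := hL ▸ log_pos hkδ
  have N_ge : (√2 + 2 / 3) ^ 2 * k * L ≤ N := by
    linarith [show 0 ≤ (√2 + 2 / 3) ^ 2 * k * L by positivity]
  simpa only [Fintype.card_fin] using stmt_7_general L_pos (by rwa [Fintype.card_fin])
    (by rwa [Fintype.card_fin]) hμ0 hμsum hnsum hdev
end

section
/- Let k ≥ 1 be a real number, δ ∈ (0,1) with k ln(k/δ) ≥ 1, write α = √2 + 2/3, and let c > 0 be a constant. Suppose T : ℝ → ℝ is a nonnegative function satisfying: (i) T(N) ≤ c·k for all 0 < N < 4k; (ii) T(N) ≤ T(N/2) + c·k for all N with 4k ≤ N < 2α² k ln(k/δ); and (iii) T(N) ≤ T(α √(k N ln(k/δ))) + c·k for all N ≥ 2α² k ln(k/δ). Then there exists a constant C > 0, depending only on c, such that for all N > 0, T(N) ≤ C · k · ( log log( max( N / (k ln(k/δ)), 4 ) ) + log log( max( k/δ, 4 ) ) + 1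 ). -/
open Real

/-!
The square-root recursion is a halving recursion in disguise: writing `N = A * 2 ^ u` with
`A = α² k log (k / δ)`, the map `N ↦ α √(k N log (k / δ)) = √(A N)` becomes `u ↦ u / 2`. So a single
estimate for halving recursions, whose number of rounds is `logb 2` of the ratio between the initial
value and the stopping threshold up to an additive constant, is used twice: on `u`, to bring `N`
below `2 * A` in about `log log (N / (k log (k / δ)))` rounds, and on `N` itself, to go from `2 * A`
down to `4 * k` in about `log log (k / δ)` rounds.
-/

section Halving

variable {T : ℝ → ℝ} {b x M d : ℝ}

lemma le_add_natCast_mul_of_halving (hd : 0 ≤ d)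
    (base : ∀ y, 0 < y → y < b → T y ≤ M)
    (halve : ∀ y, b ≤ y → y ≤ x → T y ≤ T (y / 2) + d)
    (hx : 0 < x) {n : ℕ} (hxn : x < b * 2 ^ n) : T x ≤ M + n * d := by
  induction n generalizing x with
  | zero => simpa using base x hx (by simpa using hxn)
  | succ n ih =>
    push_cast
    rcases lt_or_ge x b with hxb | hbx
    · have hcost : 0 ≤ (n + 1) * d := by positivity
      linarith [base x hx hxb]
    · have hhalf : T (x / 2) ≤ M + n * d :=
        ih (fun y hby hy ↦ halve y hby (by linarith)) (by linarith)
          (by rw [pow_succ] at hxn; linarith)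
      linarith [halve x hbx le_rfl]

lemma le_add_mul_logb_of_halving (hb : 0 < b) (hd : 0 ≤ d)
    (base : ∀ y, 0 < y → y < b → T y ≤ M)
    (halve : ∀ y, b ≤ y → y ≤ x → T y ≤ T (y / 2) + d)
    (hx : 0 < x) {r : ℝ} (hr : 1 ≤ r) (hxr : x ≤ b * r) :
    T x ≤ M + (logb 2 r + 1) * d := by
  set n := ⌊logb 2 r⌋₊ + 1
  have hrn : r < 2 ^ n := by
    rw [← rpow_natCast, ← logb_lt_iff_lt_rpow one_lt_two (by linarith)]
    exact_mod_cast Nat.lt_floor_add_one (logb 2 r)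
  have hn : (n : ℝ) ≤ logb 2 r + 1 := by
    push_cast [n]
    gcongr
    exact Nat.floor_le (logb_nonneg one_lt_two hr)
  calc T x ≤ M + n * d :=
        le_add_natCast_mul_of_halving hd base halve hx (hxr.trans_lt (by gcongr))
    _ ≤ M + (logb 2 r + 1) * d := by gcongr

end Halving

lemma sqrt_mul_mul_two_rpow {A : ℝ} (hA : 0 ≤ A) (u : ℝ) :
    √(A * (A * 2 ^ u)) = A * 2 ^ (u / 2) := by
  have hsq : A * (A * 2 ^ u) = (A * 2 ^ (u / 2)) ^ 2 := by
    rw [mul_pow, ← rpow_mul_natCast zero_le_two, Nat.cast_ofNat, div_mul_cancel₀ u two_ne_zero]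
    ring
  rw [hsq, sqrt_sq (by positivity)]

lemma le_add_mul_logb_logb_of_sqrt {T : ℝ → ℝ} {A M d N y : ℝ} (hA : 0 < A) (hd : 0 ≤ d)
    (base : ∀ n, 0 < n → n < 2 * A → T n ≤ M)
    (shrink : ∀ n, 2 * A ≤ n → T n ≤ T √(A * n) + d)
    (hN : 0 < N) (hy : 2 ≤ y) (hNy : N ≤ A * y) :
    T N ≤ M + (logb 2 (logb 2 y) + 1) * d := by
  have hr : 1 ≤ logb 2 y := by rwa [le_logb_iff_rpow_le one_lt_two (by linarith), rpow_one]
  rcases lt_or_ge N (2 * A) with hlt | hge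
  · have hcost : 0 ≤ (logb 2 (logb 2 y) + 1) * d := by
      have := logb_nonneg one_lt_two hr
      positivity
    linarith [base N hN hlt]
  have hNA : 2 ≤ N / A := by rwa [le_div_iff₀ hA]
  have hexp : A * 2 ^ logb 2 (N / A) = N := by
    rw [rpow_logb two_pos (by norm_num) (by positivity), mul_div_cancel₀ N hA.ne']
  have hbound : T (A * 2 ^ logb 2 (N / A)) ≤ M + (logb 2 (logb 2 y) + 1) * d := by
    refine le_add_mul_logb_of_halving (T := fun u ↦ T (A * 2 ^ u)) one_pos hd
      (fun u _ hu ↦ base _ (by positivity) ?_) (fun u hu _ ↦ ?_)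
      (logb_pos one_lt_two (by linarith)) hr ?_
    · have : (2 : ℝ) ^ u < 2 := rpow_lt_self_of_one_lt one_lt_two hu
      nlinarith
    · have : (2 : ℝ) ≤ 2 ^ u := self_le_rpow_of_one_le one_le_two hu
      simpa only [sqrt_mul_mul_two_rpow hA.le] using shrink (A * 2 ^ u) (by nlinarith)
    · rw [one_mul]
      exact logb_le_logb_of_le one_lt_two (by positivity) (by rwa [div_le_iff₀' hA])
  rwa [hexp] at hbound

lemma le_add_mul_of_halving_of_sqrt {T : ℝ → ℝ} {A b M d N r y : ℝ} (hA : 0 < A) (hb : 0 < b)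
    (hd : 0 ≤ d) (base : ∀ n, 0 < n → n < b → T n ≤ M)
    (halve : ∀ n, b ≤ n → n < 2 * A → T n ≤ T (n / 2) + d)
    (shrink : ∀ n, 2 * A ≤ n → T n ≤ T √(A * n) + d)
    (hr : 1 ≤ r) (hAr : 2 * A ≤ b * r) (hN : 0 < N) (hy : 2 ≤ y) (hNy : N ≤ A * y) :
    T N ≤ M + (logb 2 r + 1) * d + (logb 2 (logb 2 y) + 1) * d :=
  le_add_mul_logb_logb_of_sqrt hA hd
    (fun _ hn hnA ↦ le_add_mul_logb_of_halving hb hd base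
      (fun m hbm hmn ↦ halve m hbm (hmn.trans_lt hnA)) hn hr (hnA.le.trans hAr))
    shrink hN hy hNy

lemma logb_two_sq_div_two_mul {α x : ℝ} (hα : α ≠ 0) (hx : x ≠ 0) :
    logb 2 (α ^ 2 / 2 * x) = 2 * logb 2 α - 1 + logb 2 x := by
  rw [logb_mul (by positivity) hx, logb_div (by positivity) two_ne_zero, logb_pow,
    logb_self_eq_one one_lt_two, Nat.cast_ofNat]

lemma le_mul_logb_logb_add_logb {T : ℝ → ℝ} {α c k L N w y : ℝ} (hα : 1 ≤ α) (hc : 0 ≤ c)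
    (hk : 0 < k) (hL : 0 < L)
    (base : ∀ n, 0 < n → n < 4 * k → T n ≤ c * k)
    (halve : ∀ n, 4 * k ≤ n → n < 2 * α ^ 2 * k * L → T n ≤ T (n / 2) + c * k)
    (shrink : ∀ n, 2 * α ^ 2 * k * L ≤ n → T n ≤ T (α * √(k * n * L)) + c * k)
    (hw : 2 ≤ w) (hLw : L ≤ w) (hN : 0 < N) (hy : 2 ≤ y) (hNy : N ≤ k * L * y) :
    T N ≤ c * k * (2 * (logb 2 α + 1) + (logb 2 (logb 2 y) + logb 2 w)) := by
  set A := α ^ 2 * (k * L) with hA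
  have hα2 : 1 ≤ α ^ 2 := one_le_pow₀ hα
  have hthreshold : 2 * α ^ 2 * k * L = 2 * A := by ring
  rw [hthreshold] at halve shrink
  have hshrink (n : ℝ) : α * √(k * n * L) = √(A * n) := by
    rw [hA, mul_assoc (α ^ 2), mul_right_comm k L n, sqrt_mul (sq_nonneg α),
      sqrt_sq (by positivity)]
  simp only [hshrink] at shrink
  have hAw : 2 * A ≤ 4 * k * (α ^ 2 / 2 * w) := by
    calc 2 * (α ^ 2 * (k * L)) ≤ 2 * (α ^ 2 * (k * w)) := by gcongr
      _ = 4 * k * (α ^ 2 / 2 * w) := by ring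
  have hNA : N ≤ A * y := by
    refine hNy.trans ?_
    gcongr
    exact le_mul_of_one_le_left (by positivity) hα2
  calc T N ≤ c * k + (logb 2 (α ^ 2 / 2 * w) + 1) * (c * k)
        + (logb 2 (logb 2 y) + 1) * (c * k) :=
        le_add_mul_of_halving_of_sqrt (by positivity) (by positivity) (by positivity) base
          halve shrink (by nlinarith) hAw hN hy hNA
    _ = c * k * (2 * (logb 2 α + 1) + (logb 2 (logb 2 y) + logb 2 w)) := by
        rw [logb_two_sq_div_two_mul (by positivity) (by positivity)]
        ring

lemma log_le_logb_two {x : ℝ} (hx : 1 ≤ x) : log x ≤ logb 2 x :=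
  le_div_self (log_nonneg hx) (log_pos one_lt_two) (log_two_lt_d9.le.trans (by norm_num))

lemma two_le_logb_two {x : ℝ} (hx : 4 ≤ x) : 2 ≤ logb 2 x := by
  rw [le_logb_iff_rpow_le one_lt_two (by linarith)]
  norm_num [hx]

theorem stmt_9_general {α c k δ : ℝ} {T : ℝ → ℝ} (hα : 1 ≤ α) (hc : 0 ≤ c)
    (hδ : 0 < δ) (hδk : δ < k)
    (base : ∀ N, 0 < N → N < 4 * k → T N ≤ c * k)
    (halve : ∀ N, 4 * k ≤ N → N < 2 * α ^ 2 * k * log (k / δ) → T N ≤ T (N / 2) + c * k)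
    (shrink : ∀ N, 2 * α ^ 2 * k * log (k / δ) ≤ N →
      T N ≤ T (α * √(k * N * log (k / δ))) + c * k)
    {N : ℝ} (hN : 0 < N) :
    T N ≤ 2 * c * (logb 2 α + 1) * k *
      (logb 2 (logb 2 (max (N / (k * log (k / δ))) 4)) + logb 2 (logb 2 (max (k / δ) 4)) + 1) := by
  have hk : 0 < k := hδ.trans hδk
  have hkδ : 1 < k / δ := (one_lt_div hδ).2 hδk
  have hL : 0 < log (k / δ) := log_pos hkδ
  set y := max (N / (k * log (k / δ))) 4
  set z := max (k / δ) 4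
  have hNy : N ≤ k * log (k / δ) * y := (div_le_iff₀' (by positivity)).1 (le_max_left _ _)
  have hLz : log (k / δ) ≤ logb 2 z :=
    (log_le_logb_two hkδ.le).trans
      (logb_le_logb_of_le one_lt_two (by positivity) (le_max_left _ _))
  have hy : 4 ≤ y := le_max_right _ _
  have hlogy : 2 ≤ logb 2 y := two_le_logb_two hy
  have hlogz : 2 ≤ logb 2 z := two_le_logb_two (le_max_right _ _)
  have hlogα : 0 ≤ logb 2 α := logb_nonneg one_lt_two hα
  have hloglog : 0 ≤ logb 2 (logb 2 y) + logb 2 (logb 2 z) :=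
    add_nonneg (logb_nonneg one_lt_two (by linarith)) (logb_nonneg one_lt_two (by linarith))
  calc T N ≤ c * k * (2 * (logb 2 α + 1) + (logb 2 (logb 2 y) + logb 2 (logb 2 z))) :=
        le_mul_logb_logb_add_logb hα hc hk hL base halve shrink hlogz hLz hN (by linarith) hNy
    _ ≤ c * k * (2 * (logb 2 α + 1) * (logb 2 (logb 2 y) + logb 2 (logb 2 z) + 1)) := by
        gcongr
        nlinarith
    _ = 2 * c * (logb 2 α + 1) * k * (logb 2 (logb 2 y) + logb 2 (logb 2 z) + 1) := by ring

/-- Lemma 4.6: solving the recursion for the communication cost. Writing `α = √2 + 2/3`,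
suppose `T : ℝ → ℝ` is nonnegative and satisfies `T(N) ≤ c k` for `0 < N < 4k`,
`T(N) ≤ T(N/2) + c k` for `4k ≤ N < 2 α² k ln(k/δ)`, and
`T(N) ≤ T(α √(k N ln(k/δ))) + c k` for `N ≥ 2 α² k ln(k/δ)`. Then there is a constant
`C > 0` depending only on `c` such that for all `N > 0`,
`T(N) ≤ C k (log₂ log₂ max(N/(k ln(k/δ)), 4) + log₂ log₂ max(k/δ, 4) + 1)`. -/
theorem stmt_9 (c : ℝ) (hc : 0 < c) :
    ∃ C : ℝ, 0 < C ∧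
      ∀ (k δ : ℝ), 1 ≤ k → δ ∈ Set.Ioo (0 : ℝ) 1 → 1 ≤ k * Real.log (k / δ) →
      ∀ T : ℝ → ℝ, (∀ N, 0 ≤ T N) →
      (∀ N, 0 < N → N < 4 * k → T N ≤ c * k) →
      (∀ N, 4 * k ≤ N → N < 2 * (Real.sqrt 2 + 2 / 3) ^ 2 * k * Real.log (k / δ) →
        T N ≤ T (N / 2) + c * k) →
      (∀ N, 2 * (Real.sqrt 2 + 2 / 3) ^ 2 * k * Real.log (k / δ) ≤ N →
        T N ≤ T ((Real.sqrt 2 + 2 / 3) * Real.sqrt (k * N * Real.log (k / δ))) + c * k) →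
      ∀ N, 0 < N →
        T N ≤ C * k * (Real.logb 2 (Real.logb 2 (max (N / (k * Real.log (k / δ))) 4))
          + Real.logb 2 (Real.logb 2 (max (k / δ) 4)) + 1) := by
  have hα : 1 ≤ √2 + 2 / 3 := by linarith [one_le_sqrt.2 one_le_two]
  have hlogα : 0 ≤ logb 2 (√2 + 2 / 3) := logb_nonneg one_lt_two hα
  exact ⟨2 * c * (logb 2 (√2 + 2 / 3) + 1), by positivity,
    fun k δ hk hδ _ T _ base halve shrink N hN ↦
      stmt_9_general hα hc.le hδ.1 (hδ.2.trans_le hk) base halve shrink hN⟩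
end
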